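/- Let k ≥ 4 be even, a = k/2, and let L ⊆ ℤ⁴ be the ℤ-span of v₁ = (-a-1, a+1, a, -a+1), v₂ = (a-1, a+1, a+1, -a), v₃ = (-a-1, -a+1, a+1, -a), v₄ = (-a, -a, a, a+1). Then for every x = (-r, s, t, -u) ∈ ℤ⁴ with 0 ≤ r ≤ a+1, 0 ≤ s ≤ a+1, 0 ≤ t ≤ a+1, 0 ≤ u ≤ a+1 (the orthant of v₁, with coordinates bounded by a+1), there exists w ∈ L with ‖x - w‖₁ ≤ k, where ‖y‖₁ = |y₁| + |y₂| + |y₃| + |y₄|. -/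

import Mathlib

/-!
Suppose that two lattice points `w`, `w'` differ by a vector of `l¹` norm `4a + 1 = 2k + 1`. If `x`
lies in the coordinate box with opposite corners `w` and `w'`, then `‖x - w‖₁ + ‖x - w'‖₁ = 2k + 1`,
so one of the two distances is at most `k`. With `w = 0` and `w' = v₁` this settles every point with
`t ≤ a` and `u < a`; the rest of the orthant is covered by boxes of the same kind having a corner at
`0`, `v₁`, `v₂` or `v₃ - v₄ = (-1, 1, 1, -2a - 1)`. The reflection
`(y₁, y₂, y₃, y₄) ↦ (-y₂, -y₁, y₃, y₄)` preserves the lattice (it fixes `v₁`, interchanges `v₂` and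
`v₃`, and sends `v₄` to `v₂ - v₃ + v₄`) and interchanges `r` and `s`, so one may assume `r ≤ s`.
-/

open Set

section L1Norm

variable {ι α : Type*} [Fintype ι] [AddCommGroup α] [LinearOrder α]

/-- The `l¹` norm `‖y‖₁`, with values in the coordinate group so that it is integral on `ℤ⁴`. -/
def l1Norm (y : ι → α) : α := ∑ i, |y i|

theorem l1Norm_sub_add_l1Norm_sub_of_mem_uIcc [IsOrderedAddMonoid α] {x w w' : ι → α}
    (hx : x ∈ uIcc w w') : l1Norm (x - w) + l1Norm (x - w') = l1Norm (w - w') := by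
  rw [← pi_univ_uIcc] at hx
  simp only [l1Norm, ← Finset.sum_add_distrib, Pi.sub_apply]
  refine Finset.sum_congr rfl fun i _ ↦ ?_
  rcases mem_uIcc.1 (hx i (mem_univ i)) with ⟨h, h'⟩ | ⟨h, h'⟩
  · rw [abs_of_nonneg (sub_nonneg.2 h), abs_of_nonpos (sub_nonpos.2 h'),
      abs_of_nonpos (sub_nonpos.2 (h.trans h'))]
    abel
  · rw [abs_of_nonpos (sub_nonpos.2 h'), abs_of_nonneg (sub_nonneg.2 h),
      abs_of_nonneg (sub_nonneg.2 (h.trans h'))]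
    abel

theorem l1Norm_sub_le_or_of_mem_uIcc {x w w' : ι → ℤ} {k : ℤ} (hx : x ∈ uIcc w w')
    (hw : l1Norm (w - w') ≤ 2 * k + 1) : l1Norm (x - w) ≤ k ∨ l1Norm (x - w') ≤ k := by
  have := l1Norm_sub_add_l1Norm_sub_of_mem_uIcc hx
  omega

end L1Norm

/-- The lattice `L_k` for even `k`, indexed by `a = k / 2`; the generators are `v₁, v₂, v₃, v₄` in
this order. -/
def evenLattice (a : ℤ) : Submodule ℤ (Fin 4 → ℤ) :=
  Submodule.span ℤ {![-a - 1, a + 1, a, -a + 1], ![a - 1, a + 1, a + 1, -a],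
    ![-a - 1, -a + 1, a + 1, -a], ![-a, -a, a, a + 1]}

/-- The point `x` is within `l¹` distance `k = 2a` of the lattice `L_k`. -/
def IsCovered (a : ℤ) (x : Fin 4 → ℤ) : Prop :=
  ∃ w ∈ evenLattice a, l1Norm (x - w) ≤ 2 * a

variable {a r s t u : ℤ}

theorem mem_evenLattice {y : Fin 4 → ℤ} : y ∈ evenLattice a ↔ ∃ c₁ c₂ c₃ c₄ : ℤ,
    y 0 = c₁ * (-a - 1) + c₂ * (a - 1) + c₃ * (-a - 1) + c₄ * (-a) ∧
    y 1 = c₁ * (a + 1) + c₂ * (a + 1) + c₃ * (-a + 1) + c₄ * (-a) ∧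
    y 2 = c₁ * a + c₂ * (a + 1) + c₃ * (a + 1) + c₄ * a ∧
    y 3 = c₁ * (-a + 1) + c₂ * (-a) + c₃ * (-a) + c₄ * (a + 1) := by
  simp only [evenLattice, Submodule.mem_span_insert, Submodule.mem_span_singleton]
  constructor
  · rintro ⟨c₁, _, ⟨c₂, _, ⟨c₃, _, ⟨c₄, rfl⟩, rfl⟩, rfl⟩, rfl⟩
    exact ⟨c₁, c₂, c₃, c₄, by simp [add_assoc]⟩
  · rintro ⟨c₁, c₂, c₃, c₄, h₀, h₁, h₂, h₃⟩
    refine ⟨c₁, _, ⟨c₂, _, ⟨c₃, _, ⟨c₄, rfl⟩, rfl⟩, rfl⟩, ?_⟩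
    ext i
    fin_cases i <;> simp [*, add_assoc]

section LatticePoints

variable (a)

theorem v₁_mem : ![-a - 1, a + 1, a, -a + 1] ∈ evenLattice a :=
  mem_evenLattice.2 ⟨1, 0, 0, 0, by simp⟩

theorem v₂_mem : ![a - 1, a + 1, a + 1, -a] ∈ evenLattice a :=
  mem_evenLattice.2 ⟨0, 1, 0, 0, by simp⟩

theorem neg_v₄_mem : ![a, a, -a, -a - 1] ∈ evenLattice a :=
  mem_evenLattice.2 ⟨0, 0, 0, -1, by simp only [Matrix.cons_val]; grind⟩

theorem v₃_sub_v₄_mem : ![-1, 1, 1, -2 * a - 1] ∈ evenLattice a :=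
  mem_evenLattice.2 ⟨0, 0, 1, -1, by simp only [Matrix.cons_val]; grind⟩

theorem v₁_sub_v₄_mem : ![-1, 2 * a + 1, 0, -2 * a] ∈ evenLattice a :=
  mem_evenLattice.2 ⟨1, 0, 0, -1, by simp only [Matrix.cons_val]; grind⟩

theorem v₂_add_v₃_mem : ![-2, 2, 2 * a + 2, -2 * a] ∈ evenLattice a :=
  mem_evenLattice.2 ⟨0, 1, 1, 0, by simp only [Matrix.cons_val]; grind⟩

theorem v₂_add_v₄_mem : ![-1, 1, 2 * a + 1, 1] ∈ evenLattice a :=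
  mem_evenLattice.2 ⟨0, 1, 0, 1, by simp only [Matrix.cons_val]; grind⟩

theorem v₂_add_v₃_sub_v₁_mem : ![a - 1, -a + 1, a + 2, -a - 1] ∈ evenLattice a :=
  mem_evenLattice.2 ⟨-1, 1, 1, 0, by simp only [Matrix.cons_val]; grind⟩

theorem v₁_sub_v₂_sub_v₄_mem : ![-a, a, -a - 1, -a] ∈ evenLattice a :=
  mem_evenLattice.2 ⟨1, -1, 0, -1, by simp only [Matrix.cons_val]; grind⟩

theorem zero_mem_evenLattice : ![0, 0, 0, 0] ∈ evenLattice a :=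
  mem_evenLattice.2 ⟨0, 0, 0, 0, by simp⟩

end LatticePoints

theorem isCovered_of_mem_box {x₀ x₁ x₂ x₃ p₀ p₁ p₂ p₃ q₀ q₁ q₂ q₃ : ℤ}
    (hp : ![p₀, p₁, p₂, p₃] ∈ evenLattice a) (hq : ![q₀, q₁, q₂, q₃] ∈ evenLattice a)
    (hx : x₀ ∈ uIcc p₀ q₀ ∧ x₁ ∈ uIcc p₁ q₁ ∧ x₂ ∈ uIcc p₂ q₂ ∧ x₃ ∈ uIcc p₃ q₃)
    (hpq : |p₀ - q₀| + |p₁ - q₁| + |p₂ - q₂| + |p₃ - q₃| ≤ 4 * a + 1) :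
    IsCovered a ![x₀, x₁, x₂, x₃] := by
  have hbox : ![x₀, x₁, x₂, x₃] ∈ uIcc ![p₀, p₁, p₂, p₃] ![q₀, q₁, q₂, q₃] := by
    simpa [← pi_univ_uIcc, mem_univ_pi, Fin.forall_fin_succ] using hx
  have hnorm : l1Norm (![p₀, p₁, p₂, p₃] - ![q₀, q₁, q₂, q₃]) ≤ 2 * (2 * a) + 1 := by
    simpa [l1Norm, Fin.sum_univ_four, ← mul_assoc] using hpq
  rcases l1Norm_sub_le_or_of_mem_uIcc hbox hnorm with h | h
  exacts [⟨_, hp, h⟩, ⟨_, hq, h⟩]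

theorem IsCovered.reflect {x : Fin 4 → ℤ} (h : IsCovered a x) :
    IsCovered a ![-x 1, -x 0, x 2, x 3] := by
  obtain ⟨w, hw, hle⟩ := h
  obtain ⟨c₁, c₂, c₃, c₄, h₀, h₁, h₂, h₃⟩ := mem_evenLattice.1 hw
  refine ⟨![-w 1, -w 0, w 2, w 3],
    mem_evenLattice.2 ⟨c₁, c₃ + c₄, c₂ - c₄, c₄, by simp only [Matrix.cons_val]; grind⟩, ?_⟩
  simp only [l1Norm, Fin.sum_univ_four, Pi.sub_apply, Matrix.cons_val] at hle ⊢
  grind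

theorem isCovered_of_last_lt (hr : 0 ≤ r) (hrs : r ≤ s) (hs : s ≤ a + 1) (ht : 0 ≤ t)
    (ht' : t ≤ a + 1) (hu : 0 ≤ u) (hua : u < a) : IsCovered a ![-r, s, t, -u] := by
  obtain hta | rfl : t ≤ a ∨ t = a + 1 := by omega
  · exact isCovered_of_mem_box (zero_mem_evenLattice a) (v₁_mem a)
      (by grind [mem_uIcc]) (by grind)
  obtain rfl | hr₁ : r = 0 ∨ 1 ≤ r := by omega
  · exact isCovered_of_mem_box (zero_mem_evenLattice a) (v₂_mem a)
      (by grind [mem_uIcc]) (by grind)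
  · exact isCovered_of_mem_box (v₁_mem a) (v₂_add_v₄_mem a)
      (by grind [mem_uIcc]) (by grind)

theorem isCovered_of_one_le_third_of_le_last (ha : 1 ≤ a) (hr : 0 ≤ r) (hrs : r ≤ s)
    (hs : s ≤ a + 1) (ht : 1 ≤ t) (ht' : t ≤ a + 1) (hua : a ≤ u) (hu : u ≤ a + 1) :
    IsCovered a ![-r, s, t, -u] := by
  obtain rfl | hs₁ : s = 0 ∨ 1 ≤ s := by omega
  · exact isCovered_of_mem_box (zero_mem_evenLattice a) (v₂_add_v₃_sub_v₁_mem a)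
      (by grind [mem_uIcc]) (by grind)
  obtain hr₁ | hr₂ : r ≤ 1 ∨ 2 ≤ r := by omega
  · exact isCovered_of_mem_box (v₃_sub_v₄_mem a) (v₂_mem a)
      (by grind [mem_uIcc]) (by grind)
  obtain hta | rfl : t ≤ a ∨ t = a + 1 := by omega
  · exact isCovered_of_mem_box (v₃_sub_v₄_mem a) (v₁_mem a)
      (by grind [mem_uIcc]) (by grind)
  · exact isCovered_of_mem_box (v₁_mem a) (v₂_add_v₃_mem a)
      (by grind [mem_uIcc]) (by grind)

theorem isCovered_of_third_eq_zero_of_le_last (ha : 1 ≤ a) (hr : 0 ≤ r) (hrs : r ≤ s)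
    (hs : s ≤ a + 1) (hua : a ≤ u) (hu : u ≤ a + 1) : IsCovered a ![-r, s, 0, -u] := by
  obtain hsa | rfl : s ≤ a ∨ s = a + 1 := by omega
  · obtain rfl | hr₁ : r = 0 ∨ 1 ≤ r := by omega
    · exact isCovered_of_mem_box (zero_mem_evenLattice a) (neg_v₄_mem a)
        (by grind [mem_uIcc]) (by grind)
    · exact isCovered_of_mem_box (v₃_sub_v₄_mem a) (v₁_sub_v₂_sub_v₄_mem a)
        (by grind [mem_uIcc]) (by grind)
  · obtain rfl | hr₁ : r = 0 ∨ 1 ≤ r := by omega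
    · exact isCovered_of_mem_box (v₂_mem a) (v₁_sub_v₄_mem a)
        (by grind [mem_uIcc]) (by grind)
    · exact isCovered_of_mem_box (v₁_mem a) (v₁_sub_v₄_mem a)
        (by grind [mem_uIcc]) (by grind)

theorem isCovered_of_mem_orthant (ha : 1 ≤ a) (hr : 0 ≤ r) (hr' : r ≤ a + 1) (hs : 0 ≤ s)
    (hs' : s ≤ a + 1) (ht : 0 ≤ t) (ht' : t ≤ a + 1) (hu : 0 ≤ u) (hu' : u ≤ a + 1) :
    IsCovered a ![-r, s, t, -u] := by
  wlog hrs : r ≤ s generalizing r s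
  · simpa using (this hs hs' hr hr' (le_of_not_ge hrs)).reflect
  obtain hua | hua := lt_or_ge u a
  · exact isCovered_of_last_lt hr hrs hs' ht ht' hu hua
  obtain rfl | ht₁ : t = 0 ∨ 1 ≤ t := by omega
  · exact isCovered_of_third_eq_zero_of_le_last ha hr hrs hs' hua hu'
  · exact isCovered_of_one_le_third_of_le_last ha hr hrs hs' ht₁ ht' hua hu'

/-- Orthant of `v₁`, `k ≡ 0 (mod 2)`: for even `k ≥ 4`, `a = k/2`, every point
`x = (-r, s, t, -u)` with `0 ≤ r, s, t, u ≤ a + 1` is within `l¹`-distance `k`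
of the lattice `L`. -/
theorem lattice_orthant_v₁_even (k a : ℤ) (hk : 4 ≤ k) (hke : Even k) (ha : a = k / 2)
    (v₁ v₂ v₃ v₄ : Fin 4 → ℤ)
    (hv₁ : v₁ = ![-a - 1, a + 1, a, -a + 1])
    (hv₂ : v₂ = ![a - 1, a + 1, a + 1, -a])
    (hv₃ : v₃ = ![-a - 1, -a + 1, a + 1, -a])
    (hv₄ : v₄ = ![-a, -a, a, a + 1])
    (L : Submodule ℤ (Fin 4 → ℤ))
    (hL : L = Submodule.span ℤ {v₁, v₂, v₃, v₄}) :
    ∀ r s t u : ℤ, 0 ≤ r → r ≤ a + 1 → 0 ≤ s → s ≤ a + 1 →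
      0 ≤ t → t ≤ a + 1 → 0 ≤ u → u ≤ a + 1 →
      ∀ x : Fin 4 → ℤ, x = ![-r, s, t, -u] →
      ∃ w ∈ L, |x 0 - w 0| + |x 1 - w 1| + |x 2 - w 2| + |x 3 - w 3| ≤ k := by
  rintro r s t u hr hr' hs hs' ht ht' hu hu' x rfl
  subst hL hv₁ hv₂ hv₃ hv₄
  obtain rfl : k = 2 * a := by grind
  obtain ⟨w, hw, hle⟩ := isCovered_of_mem_orthant (by omega : 1 ≤ a) hr hr' hs hs' ht ht' hu hu'
  exact ⟨w, hw, by simpa only [l1Norm, Fin.sum_univ_four, Pi.sub_apply] using hle⟩
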